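/- arXiv:2010.14958 — 5 statements merged into one kernel-verified Lean document; each statement's English description precedes it below -/
import Mathlib

section
/- Let k be a field of characteristic zero, A a commutative k-algebra, and Der(A) the Lie algebra (under commutator) and A-module of k-linear derivations of A. Let f ∈ Der(A) and let V ⊆ Der(A) be an A-submodule such that ⁅v, w⁆ ∈ V for all v, w ∈ V. Define A-submodules D1 := A•f + V, D2 := D1 + span_A{⁅v, f⁆ : v ∈ V}, and D3 := D2 + span_A{⁅v, ξ⁆ : v ∈ V, ξ ∈ D2}. If ⁅f, ξ⁆ ∈ D2 for every ξ ∈ D2, then ⁅f, η⁆ ∈ D3 for every η ∈ D3, and ⁅ξ, ξ'⁆ ∈ D3 for all ξ, ξ' ∈ D2. -/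
/-!
Apply `(ad f)²` to `⁅v, w⁆ ∈ V`. By the Leibniz rule
`2 ⁅⁅f, v⁆, ⁅f, w⁆⁆ = ⁅f, ⁅f, ⁅v, w⁆⁆⁆ - ⁅⁅f, ⁅f, v⁆⁆, w⁆ - ⁅v, ⁅f, ⁅f, w⁆⁆⁆`,
and since `D2` is stable under `ad f`, the right-hand side lies in `D2 + ⁅V, D2⁆ ⊆ D3`. Dividing
by `2` settles the only nontrivial bracket of generators of `D2`, so `⁅D2, D2⁆ ⊆ D3`. Then
`⁅f, ⁅v, ξ⁆⁆ = ⁅⁅f, v⁆, ξ⁆ + ⁅v, ⁅f, ξ⁆⁆` lies in `⁅D2, D2⁆ + ⁅V, D2⁆ ⊆ D3`. Nothing here is special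
to derivations: the same computation works in every Lie–Rinehart ring.
-/

section LieRing

variable {A L : Type*} [LieRing L]

theorem two_nsmul_lie_lie_lie (f v w : L) :
    2 • ⁅⁅f, v⁆, ⁅f, w⁆⁆ = ⁅f, ⁅f, ⁅v, w⁆⁆⁆ - ⁅⁅f, ⁅f, v⁆⁆, w⁆ - ⁅v, ⁅f, ⁅f, w⁆⁆⁆ := by
  rw [leibniz_lie f v w, lie_add, leibniz_lie f ⁅f, v⁆ w, leibniz_lie f v ⁅f, w⁆]
  abel

theorem lie_mem_comm [Ring A] [Module A L] {D : Submodule A L} {x y : L} :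
    ⁅x, y⁆ ∈ D ↔ ⁅y, x⁆ ∈ D := by
  rw [← lie_skew, neg_mem_iff]

theorem lie_lie_lie_mem_of_isUnit_two [Ring A] [Module A L] (h2 : IsUnit (2 : A))
    {f : L} {V D E : Submodule A L} (hV : ∀ v ∈ V, ∀ w ∈ V, ⁅v, w⁆ ∈ V) (hVD : V ≤ D) (hDE : D ≤ E)
    (hfD : ∀ ξ ∈ D, ⁅f, ξ⁆ ∈ D) (hVDE : ∀ v ∈ V, ∀ ξ ∈ D, ⁅v, ξ⁆ ∈ E)
    {v w : L} (hv : v ∈ V) (hw : w ∈ V) : ⁅⁅f, v⁆, ⁅f, w⁆⁆ ∈ E := by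
  have ad_sq_mem : ∀ u ∈ V, ⁅f, ⁅f, u⁆⁆ ∈ D := fun u hu ↦ hfD _ (hfD u (hVD hu))
  rw [← E.smul_mem_iff_of_isUnit h2, ofNat_smul_eq_nsmul, two_nsmul_lie_lie_lie]
  exact sub_mem
    (sub_mem (hDE (ad_sq_mem _ (hV v hv w hw))) (lie_mem_comm.1 (hVDE w hw _ (ad_sq_mem v hv))))
    (hVDE v hv _ (ad_sq_mem w hw))

theorem span_singleton_sup_sup_span_lie_le_iff [Ring A] [Module A L] {f : L}
    {V N : Submodule A L} :
    Submodule.span A {f} ⊔ V ⊔ Submodule.span A {x | ∃ v ∈ V, x = ⁅v, f⁆} ≤ N ↔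
      f ∈ N ∧ V ≤ N ∧ ∀ v ∈ V, ⁅v, f⁆ ∈ N := by
  have span_lie_le_iff :
      Submodule.span A {x | ∃ v ∈ V, x = ⁅v, f⁆} ≤ N ↔ ∀ v ∈ V, ⁅v, f⁆ ∈ N := by
    rw [Submodule.span_le]
    exact ⟨fun h v hv ↦ h ⟨v, hv, rfl⟩, by rintro h _ ⟨v, hv, rfl⟩; exact h v hv⟩
  rw [sup_le_iff, sup_le_iff, Submodule.span_singleton_le_iff_mem, span_lie_le_iff, and_assoc]

end LieRing

section LieRinehart

variable {A L : Type*} [CommRing A] [LieRing L] [Module A L] [LieRingModule L A]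
  [LieRinehartRing A L]

/-- The elements of `D` whose brackets with all elements of `X` stay in `D`. Bracketing with `x` is
not `A`-linear, `⁅x, a • y⁆ = a • ⁅x, y⁆ + ⁅x, a⁆ • y`; requiring `y ∈ D` absorbs the second term
and makes this a submodule, so inclusions into it can be checked on generators. -/
def lieTransporter (X : Set L) (D : Submodule A L) : Submodule A L where
  carrier := {y | y ∈ D ∧ ∀ x ∈ X, ⁅x, y⁆ ∈ D}
  add_mem' hy hz :=
    ⟨add_mem hy.1 hz.1, fun x hx ↦ by rw [lie_add]; exact add_mem (hy.2 x hx) (hz.2 x hx)⟩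
  zero_mem' := ⟨zero_mem D, fun x _ ↦ by rw [lie_zero]; exact zero_mem D⟩
  smul_mem' a y hy := ⟨D.smul_mem a hy.1, fun x hx ↦ by
    rw [LieRinehartRing.leibniz_smul_right]
    exact add_mem (D.smul_mem a (hy.2 x hx)) (D.smul_mem _ hy.1)⟩

theorem le_lieTransporter_self (h2 : IsUnit (2 : A)) {f : L} {V D E : Submodule A L}
    (hV : ∀ v ∈ V, ∀ w ∈ V, ⁅v, w⁆ ∈ V)
    (hD : D = Submodule.span A {f} ⊔ V ⊔ Submodule.span A {x | ∃ v ∈ V, x = ⁅v, f⁆})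
    (hDE : D ≤ E) (hfD : ∀ ξ ∈ D, ⁅f, ξ⁆ ∈ D) (hVDE : ∀ v ∈ V, ∀ ξ ∈ D, ⁅v, ξ⁆ ∈ E) :
    D ≤ lieTransporter (D : Set L) E := by
  obtain ⟨f_mem, hVD, lie_f_mem⟩ := span_singleton_sup_sup_span_lie_le_iff.1 hD.ge
  have lie_lie_f_mem : ∀ v ∈ V, ∀ w ∈ V, ⁅⁅v, f⁆, ⁅w, f⁆⁆ ∈ E := fun v hv w hw ↦ by
    rw [← lie_skew v f, ← lie_skew w f, neg_lie, lie_neg, neg_neg]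
    exact lie_lie_lie_mem_of_isUnit_two h2 hV hVD hDE hfD hVDE hv hw
  have le_transporter_lie_f : ∀ v ∈ V, D ≤ lieTransporter {⁅v, f⁆} E := fun v hv ↦ by
    refine hD.le.trans (span_singleton_sup_sup_span_lie_le_iff.2 ⟨⟨hDE f_mem, ?_⟩,
      fun w hw ↦ ⟨hDE (hVD hw), ?_⟩, fun w hw ↦ ⟨hDE (lie_f_mem w hw), ?_⟩⟩) <;> rintro _ rfl
    · exact lie_mem_comm.1 (hDE (hfD _ (lie_f_mem v hv)))
    · exact lie_mem_comm.1 (hVDE w hw _ (lie_f_mem v hv))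
    · exact lie_lie_f_mem v hv w hw
  refine hD.le.trans (span_singleton_sup_sup_span_lie_le_iff.2 ⟨⟨hDE f_mem, fun ξ hξ ↦ ?_⟩,
    fun v hv ↦ ⟨hDE (hVD hv), fun ξ hξ ↦ ?_⟩,
    fun v hv ↦ ⟨hDE (lie_f_mem v hv), fun ξ hξ ↦ ?_⟩⟩) <;> rw [lie_mem_comm]
  · exact hDE (hfD ξ hξ)
  · exact hVDE v hv ξ hξ
  · exact (le_transporter_lie_f v hv hξ).2 _ rfl

theorem characteristic_connection_derived_system_general (h2 : IsUnit (2 : A))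
    (f : L) (V : Submodule A L) (hV : ∀ v ∈ V, ∀ w ∈ V, ⁅v, w⁆ ∈ V) (D1 D2 D3 : Submodule A L)
    (hD1 : D1 = Submodule.span A {f} ⊔ V)
    (hD2 : D2 = D1 ⊔ Submodule.span A {x | ∃ v ∈ V, x = ⁅v, f⁆})
    (hD3 : D3 = D2 ⊔ Submodule.span A {x | ∃ v ∈ V, ∃ ξ ∈ D2, x = ⁅v, ξ⁆})
    (hchar : ∀ ξ ∈ D2, ⁅f, ξ⁆ ∈ D2) :
    (∀ η ∈ D3, ⁅f, η⁆ ∈ D3) ∧ (∀ ξ ∈ D2, ∀ ξ' ∈ D2, ⁅ξ, ξ'⁆ ∈ D3) := by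
  have hVD2 : V ≤ D2 := hD2 ▸ hD1 ▸ le_sup_right.trans le_sup_left
  have hD23 : D2 ≤ D3 := hD3 ▸ le_sup_left
  have lie_V_mem : ∀ v ∈ V, ∀ ξ ∈ D2, ⁅v, ξ⁆ ∈ D3 := fun v hv ξ hξ ↦
    hD3 ▸ Submodule.mem_sup_right (Submodule.subset_span ⟨v, hv, ξ, hξ, rfl⟩)
  have lie_D2_mem : ∀ ξ ∈ D2, ∀ ξ' ∈ D2, ⁅ξ, ξ'⁆ ∈ D3 := fun ξ hξ ξ' hξ' ↦
    (le_lieTransporter_self h2 hV (hD1 ▸ hD2) hD23 hchar lie_V_mem hξ').2 ξ hξ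
  suffices D3_le : D3 ≤ lieTransporter {f} D3 from ⟨fun η hη ↦ (D3_le hη).2 f rfl, lie_D2_mem⟩
  refine hD3.le.trans (sup_le (fun ξ hξ ↦ ⟨hD23 hξ, ?_⟩) (Submodule.span_le.2 ?_))
  · rintro _ rfl
    exact hD23 (hchar ξ hξ)
  · rintro _ ⟨v, hv, ξ, hξ, rfl⟩
    refine ⟨lie_V_mem v hv ξ hξ, ?_⟩
    rintro _ rfl
    rw [leibniz_lie]
    exact add_mem (lie_D2_mem _ (hchar v (hVD2 hv)) ξ hξ) (lie_V_mem v hv _ (hchar ξ hξ))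

end LieRinehart

/-- Let `k` be a field of characteristic zero, `A` a commutative `k`-algebra and
`Der(A) = Derivation k A A` the Lie algebra (under commutator) and `A`-module of
`k`-linear derivations of `A`.  Let `f ∈ Der(A)` and let `V ⊆ Der(A)` be an
`A`-submodule closed under the Lie bracket.  Define `A`-submodules
`D1 := A•f + V`, `D2 := D1 + span_A {⁅v, f⁆ : v ∈ V}` and
`D3 := D2 + span_A {⁅v, ξ⁆ : v ∈ V, ξ ∈ D2}`.
If `⁅f, ξ⁆ ∈ D2` for every `ξ ∈ D2`, then `⁅f, η⁆ ∈ D3` for every `η ∈ D3`, and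
`⁅ξ, ξ'⁆ ∈ D3` for all `ξ, ξ' ∈ D2`. -/
theorem characteristic_connection_derived_system
    {k A : Type*} [Field k] [CharZero k] [CommRing A] [Algebra k A]
    (f : Derivation k A A) (V : Submodule A (Derivation k A A))
    (hV : ∀ v ∈ V, ∀ w ∈ V, ⁅v, w⁆ ∈ V)
    (D1 D2 D3 : Submodule A (Derivation k A A))
    (hD1 : D1 = Submodule.span A {f} ⊔ V)
    (hD2 : D2 = D1 ⊔ Submodule.span A {x | ∃ v ∈ V, x = ⁅v, f⁆})
    (hD3 : D3 = D2 ⊔ Submodule.span A {x | ∃ v ∈ V, ∃ ξ ∈ D2, x = ⁅v, ξ⁆})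
    (hchar : ∀ ξ ∈ D2, ⁅f, ξ⁆ ∈ D2) :
    (∀ η ∈ D3, ⁅f, η⁆ ∈ D3) ∧ (∀ ξ ∈ D2, ∀ ξ' ∈ D2, ⁅ξ, ξ'⁆ ∈ D3) := by
  have h2 : IsUnit (2 : A) := by
    simpa only [map_ofNat] using (IsUnit.mk0 (2 : k) two_ne_zero).map (algebraMap k A)
  exact characteristic_connection_derived_system_general h2 f V hV D1 D2 D3 hD1 hD2 hD3 hchar
end

section
/- Let R be a commutative ring, A a commutative R-algebra, and f, v ∈ Der(A) R-linear derivations of A. Then for every h ∈ A one has ⁅h•f, ⁅h•f, v⁆⁆ = (h·h)•⁅f, ⁅f, v⁆⁆ + (h·(f h))•⁅f, v⁆ − ( h·(⁅f,v⁆ h) + h·(f (v h)) − (v h)·(f h) )•f. -/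
section LieRinehart

variable {A L : Type*} [CommRing A] [LieRing L] [Module A L] [LieRingModule L A]
  [LieRinehartRing A L]

theorem lieRinehart_leibniz_smul_left (a : A) (x y : L) :
    ⁅a • x, y⁆ = a • ⁅x, y⁆ - ⁅y, a⁆ • x := by
  rw [← lie_skew, LieRinehartRing.leibniz_smul_right, ← lie_skew x y]
  module

theorem lieRinehart_leibniz_smul_smul (a b : A) (x y : L) :
    ⁅a • x, b • y⁆ = (a * b) • ⁅x, y⁆ + (a * ⁅x, b⁆) • y - (b * ⁅y, a⁆) • x := by
  rw [LieRinehartRing.leibniz_smul_right, LieRinehartRing.lie_smul_eq_mul,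
    lieRinehart_leibniz_smul_left]
  module

theorem derivation_double_bracket_rescale_general (x y : L) (a : A) :
    ⁅a • x, ⁅a • x, y⁆⁆ =
      (a * a) • ⁅x, ⁅x, y⁆⁆ + (a * ⁅x, a⁆) • ⁅x, y⁆
        - (a * ⁅⁅x, y⁆, a⁆ + a * ⁅x, ⁅y, a⁆⁆ - ⁅y, a⁆ * ⁅x, a⁆) • x := by
  have bracket_with_lie : ⁅a • x, a • ⁅x, y⁆⁆ =
      (a * a) • ⁅x, ⁅x, y⁆⁆ + (a * ⁅x, a⁆) • ⁅x, y⁆ - (a * ⁅⁅x, y⁆, a⁆) • x :=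
    lieRinehart_leibniz_smul_smul a a x ⁅x, y⁆
  have bracket_with_self : ⁅a • x, ⁅y, a⁆ • x⁆ =
      (a * ⁅x, ⁅y, a⁆⁆ - ⁅y, a⁆ * ⁅x, a⁆) • x := by
    rw [lieRinehart_leibniz_smul_smul, lie_self, smul_zero, zero_add, sub_smul]
  rw [lieRinehart_leibniz_smul_left a x y, lie_sub, bracket_with_lie, bracket_with_self]
  module

end LieRinehart

/-- Let `R` be a commutative ring, `A` a commutative `R`-algebra, and `f, v` `R`-linear
derivations of `A`.  Then for every `h ∈ A` one has
`⁅h•f, ⁅h•f, v⁆⁆ = (h·h)•⁅f, ⁅f, v⁆⁆ + (h·(f h))•⁅f, v⁆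
   − (h·(⁅f,v⁆ h) + h·(f (v h)) − (v h)·(f h))•f`. -/
theorem derivation_double_bracket_rescale
    {R A : Type*} [CommRing R] [CommRing A] [Algebra R A]
    (f v : Derivation R A A) (h : A) :
    ⁅h • f, ⁅h • f, v⁆⁆ =
      (h * h) • ⁅f, ⁅f, v⁆⁆ + (h * f h) • ⁅f, v⁆
        - (h * (⁅f, v⁆ h) + h * (f (v h)) - (v h) * (f h)) • f :=
  derivation_double_bracket_rescale_general f v h
end

section
/- Let 𝔤 be a finite-dimensional complex simple Lie algebra with Cartan subalgebra 𝔥, root system Φ, base of simple roots Δ, and let α ∈ Δ be a long simple root. Then for every positive root β, writing β = Σ_{γ∈Δ} n_γ(β)·γ, if n_α(β) = 1 then Σ_{γ ∈ N(α)} n_γ(β) ≤ 3, where N(α) is the set of simple roots γ ≠ α with (γ,α) ≠ 0 (the Dynkin neighbors of α). -/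
open scoped RealInnerProductSpace Classical

/-!
Pair `β = ∑ n_γ γ` with the coroot of `α`. The term `γ = α` contributes `2 n_α`, every neighbor
contributes at most `-n_γ`, and the remaining simple roots contribute nothing. On the other hand
the pairing is an integer, and as `β` is no longer than `α` and `β ≠ -α`, it is at least `-1`.
Hence `∑_{γ ∈ N(α)} n_γ ≤ 2 n_α + 1`.
-/

section LinearIndependence

variable {R M : Type*} [Ring R] [LinearOrder R] [IsStrictOrderedRing R]
  [AddCommGroup M] [Module R M] {Δ : Finset M} {α γ : M} {c : M → R}

theorem sum_smul_add_ne_zero (hΔ : LinearIndepOn R id (Δ : Set M)) (hα : α ∈ Δ) (hc : 0 ≤ c α) :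
    ∑ δ ∈ Δ, c δ • δ + α ≠ 0 := by
  intro hzero
  have hcoeff : c α + 1 = 0 := by
    simpa using linearIndepOn_finset_iff.mp hΔ (fun δ => c δ + if δ = α then 1 else 0)
      (by simpa [add_smul, Finset.sum_add_distrib, hα] using hzero) α hα
  exact (add_pos_of_nonneg_of_pos hc one_pos).ne' hcoeff

theorem nonpos_of_sub_smul_eq_sum_smul (hΔ : LinearIndepOn R id (Δ : Set M))
    (hα : α ∈ Δ) (hγ : γ ∈ Δ) (hne : γ ≠ α) {t : R} (hc : γ - t • α = ∑ δ ∈ Δ, c δ • δ)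
    (hsign : (∀ δ ∈ Δ, 0 ≤ c δ) ∨ ∀ δ ∈ Δ, c δ ≤ 0) : t ≤ 0 := by
  have hcoeff : ∀ δ ∈ Δ, (c δ + if δ = α then t else 0) = if δ = γ then 1 else 0 :=
    linearIndepOn_finset_iffₛ.mp hΔ _ _
      (by simp [add_smul, Finset.sum_add_distrib, hα, hγ, ← hc])
  have hcγ : c γ = 1 := by simpa [hne] using hcoeff γ hγ
  have hcα : c α + t = 0 := by simpa [hne.symm] using hcoeff α hα
  rcases hsign with hnonneg | hnonpos
  · exact eq_neg_of_add_eq_zero_right hcα ▸ neg_nonpos.mpr (hnonneg α hα)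
  · exact absurd (hcγ ▸ hnonpos γ hγ) one_pos.not_ge

end LinearIndependence

section CartanNumber

variable {E : Type*} [NormedAddCommGroup E] [InnerProductSpace ℝ E] {α β γ : E}

/-- The pairing `⟨β, α^∨⟩ = 2(β, α)/(α, α)` of `β` with the coroot of `α`, defined for arbitrary
vectors; it takes the junk value `0` at `α = 0`. -/
noncomputable def cartanNumber (β α : E) : ℝ := 2 * ⟪β, α⟫ / ⟪α, α⟫

theorem cartanNumber_self (hα : α ≠ 0) : cartanNumber α α = 2 :=
  mul_div_cancel_right₀ 2 (inner_self_ne_zero.mpr hα)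

theorem cartanNumber_eq_zero_iff : cartanNumber β α = 0 ↔ ⟪β, α⟫ = 0 := by
  rcases eq_or_ne α 0 with rfl | hα
  · simp [cartanNumber]
  · simp [cartanNumber, hα]

theorem cartanNumber_sum_smul {ι : Type*} (s : Finset ι) (c : ι → ℝ) (v : ι → E) (α : E) :
    cartanNumber (∑ i ∈ s, c i • v i) α = ∑ i ∈ s, c i * cartanNumber (v i) α := by
  simp only [cartanNumber, sum_inner, real_inner_smul_left, Finset.mul_sum, Finset.sum_div]
  exact Finset.sum_congr rfl fun i _ => by ring

theorem cartanNumber_sum_smul_eq_two_mul_add {Δ : Finset E} (hα : α ∈ Δ) (hα0 : α ≠ 0)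
    (c : E → ℝ) :
    cartanNumber (∑ γ ∈ Δ, c γ • γ) α =
      2 * c α + ∑ γ ∈ Δ with γ ≠ α ∧ ⟪γ, α⟫ ≠ 0, c γ * cartanNumber γ α := by
  have hneighbors : ∑ γ ∈ Δ with γ ≠ α ∧ ⟪γ, α⟫ ≠ 0, c γ * cartanNumber γ α =
      ∑ γ ∈ Δ.erase α, c γ * cartanNumber γ α := by
    rw [← Finset.filter_filter, Finset.filter_ne']
    exact Finset.sum_filter_of_ne fun γ _ hγ =>
      cartanNumber_eq_zero_iff.not.mp (right_ne_zero_of_mul hγ)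
  rw [cartanNumber_sum_smul, hneighbors, ← Finset.add_sum_erase Δ _ hα, cartanNumber_self hα0,
    mul_comm]

theorem neg_two_lt_cartanNumber (hlen : ⟪β, β⟫ ≤ ⟪α, α⟫) (hne : β + α ≠ 0) :
    -2 < cartanNumber β α := by
  have hα : α ≠ 0 := by
    rintro rfl
    have hβ : β = 0 := by simpa using hlen
    exact hne (by simp [hβ])
  have hsum : 0 < ⟪β, β⟫ + 2 * ⟪β, α⟫ + ⟪α, α⟫ := by
    rw [← real_inner_add_add_self]
    exact real_inner_self_pos.mpr hne
  rw [cartanNumber, lt_div_iff₀ (real_inner_self_pos.mpr hα)]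
  linarith

theorem neg_one_le_cartanNumber (hcrys : ∃ m : ℤ, cartanNumber β α = m)
    (hlen : ⟪β, β⟫ ≤ ⟪α, α⟫) (hne : β + α ≠ 0) : -1 ≤ cartanNumber β α := by
  obtain ⟨m, hm⟩ := hcrys
  have hlt : -2 < (m : ℝ) := hm ▸ neg_two_lt_cartanNumber hlen hne
  rw [hm]
  exact_mod_cast Int.add_one_le_of_lt (by exact_mod_cast hlt : -2 < m)

theorem cartanNumber_le_neg_one (hcrys : ∃ m : ℤ, cartanNumber γ α = m)
    (hnonpos : cartanNumber γ α ≤ 0) (hinner : ⟪γ, α⟫ ≠ 0) : cartanNumber γ α ≤ -1 := by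
  obtain ⟨m, hm⟩ := hcrys
  have hlt : (m : ℝ) < 0 := hm ▸ hnonpos.lt_of_ne (cartanNumber_eq_zero_iff.not.mpr hinner)
  rw [hm]
  exact_mod_cast Int.le_sub_one_of_lt (by exact_mod_cast hlt : m < 0)

end CartanNumber

theorem long_root_neighbor_coefficient_bound_general
    {E : Type*} [NormedAddCommGroup E] [InnerProductSpace ℝ E] {Φ : Set E} {α β : E}
    (hrefl : ∀ γ ∈ Φ, γ - cartanNumber γ α • α ∈ Φ)
    (hcrys : ∀ γ ∈ Φ, ∃ m : ℤ, cartanNumber γ α = m)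
    {Δ : Finset E} (hΔΦ : (Δ : Set E) ⊆ Φ) (hΔ : LinearIndepOn ℝ id (Δ : Set E))
    {n : E → E → ℤ} (hn : ∀ γ ∈ Φ, γ = ∑ δ ∈ Δ, (n γ δ : ℝ) • δ)
    (hsign : ∀ γ ∈ Φ, (∀ δ ∈ Δ, 0 ≤ n γ δ) ∨ (∀ δ ∈ Δ, n γ δ ≤ 0))
    (hα : α ∈ Δ) (hβ : β ∈ Φ) (hlen : ⟪β, β⟫ ≤ ⟪α, α⟫) (hβpos : ∀ γ ∈ Δ, 0 ≤ n β γ) :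
    ∑ γ ∈ Δ with γ ≠ α ∧ ⟪γ, α⟫ ≠ 0, n β γ ≤ 2 * n β α + 1 := by
  have hβα : β + α ≠ 0 := by
    rw [hn β hβ]
    exact sum_smul_add_ne_zero hΔ hα (Int.cast_nonneg (hβpos α hα))
  have hneighbor : ∀ γ ∈ Δ, γ ≠ α → ⟪γ, α⟫ ≠ 0 → cartanNumber γ α ≤ -1 := by
    intro γ hγ hne hinner
    have hγ' := hrefl γ (hΔΦ hγ)
    refine cartanNumber_le_neg_one (hcrys γ (hΔΦ hγ)) ?_ hinner
    exact nonpos_of_sub_smul_eq_sum_smul hΔ hα hγ hne (hn _ hγ') (by exact_mod_cast hsign _ hγ')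
  have hbound : -1 ≤ 2 * (n β α : ℝ) - ∑ γ ∈ Δ with γ ≠ α ∧ ⟪γ, α⟫ ≠ 0, (n β γ : ℝ) :=
    calc -1 ≤ cartanNumber β α := neg_one_le_cartanNumber (hcrys β hβ) hlen hβα
      _ = 2 * (n β α : ℝ) +
          ∑ γ ∈ Δ with γ ≠ α ∧ ⟪γ, α⟫ ≠ 0, (n β γ : ℝ) * cartanNumber γ α := by
        conv_lhs => rw [hn β hβ]
        exact cartanNumber_sum_smul_eq_two_mul_add hα (hΔ.ne_zero hα) _
      _ ≤ 2 * (n β α : ℝ) + ∑ γ ∈ Δ with γ ≠ α ∧ ⟪γ, α⟫ ≠ 0, (n β γ : ℝ) * -1 := by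
        gcongr with γ hγ
        · exact Int.cast_nonneg (hβpos γ (Finset.mem_filter.mp hγ).1)
        · obtain ⟨hγΔ, hne, hinner⟩ := Finset.mem_filter.mp hγ
          exact hneighbor γ hγΔ hne hinner
      _ = _ := by rw [← Finset.sum_mul]; ring
  have hcast : ∑ γ ∈ Δ with γ ≠ α ∧ ⟪γ, α⟫ ≠ 0, (n β γ : ℝ) ≤ 2 * (n β α : ℝ) + 1 := by
    linarith
  exact_mod_cast hcast

/-- Let `Φ` be the root system of a finite-dimensional complex simple Lie algebra
(an irreducible reduced crystallographic root system in a real inner product space `E`)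
with base of simple roots `Δ`, every root `β` being written `β = Σ_{γ∈Δ} n β γ • γ`
with integer coefficients all of the same sign.  Let `α ∈ Δ` be a long simple root.
Then for every positive root `β`, if `n β α = 1` then `Σ_{γ ∈ N(α)} n β γ ≤ 3`, where
`N(α)` is the set of simple roots `γ ≠ α` with `(γ, α) ≠ 0` (the Dynkin neighbors of `α`). -/
theorem long_root_neighbor_coefficient_bound
    {E : Type*} [NormedAddCommGroup E] [InnerProductSpace ℝ E]
    (Φ : Finset E)
    (hΦ0 : (0 : E) ∉ Φ)
    (hspan : Submodule.span ℝ (Φ : Set E) = ⊤)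
    (hrefl : ∀ α ∈ Φ, ∀ β ∈ Φ, β - (2 * ⟪β, α⟫ / ⟪α, α⟫) • α ∈ Φ)
    (hcrys : ∀ α ∈ Φ, ∀ β ∈ Φ, ∃ m : ℤ, 2 * ⟪β, α⟫ / ⟪α, α⟫ = (m : ℝ))
    (hred : ∀ α ∈ Φ, ∀ t : ℝ, t • α ∈ Φ → t = 1 ∨ t = -1)
    (hirr : ∀ S : Set E,
      (∀ β ∈ Φ, ∀ γ ∈ Φ, β ∈ S → ⟪β, γ⟫ ≠ 0 → γ ∈ S) →
      (∃ β ∈ Φ, β ∈ S) → ∀ β ∈ Φ, β ∈ S)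
    -- `Δ` is a base of simple roots, with coefficient function `n`
    (Δ : Finset E) (hΔΦ : (Δ : Set E) ⊆ (Φ : Set E))
    (hΔli : LinearIndependent ℝ (fun γ : Δ => (γ : E)))
    (n : E → E → ℤ)
    (hn : ∀ β ∈ Φ, β = ∑ γ ∈ Δ, (n β γ : ℝ) • γ)
    (hsign : ∀ β ∈ Φ, (∀ γ ∈ Δ, 0 ≤ n β γ) ∨ (∀ γ ∈ Δ, n β γ ≤ 0))
    -- `α` is a long simple root
    (α : E) (hαΔ : α ∈ Δ)
    (hlong : ∀ γ ∈ Φ, ⟪γ, γ⟫ ≤ ⟪α, α⟫)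
    -- `β` is a positive root with `n_α(β) = 1`
    (β : E) (hβ : β ∈ Φ) (hβpos : ∀ γ ∈ Δ, 0 ≤ n β γ)
    (hβα : n β α = 1) :
    ∑ γ ∈ Δ.filter (fun γ => γ ≠ α ∧ ⟪γ, α⟫ ≠ 0), n β γ ≤ 3 := by
  simpa [hβα] using long_root_neighbor_coefficient_bound_general (hrefl α (hΔΦ hαΔ))
    (hcrys α (hΔΦ hαΔ)) hΔΦ hΔli hn hsign hαΔ hβ (hlong β hβ) hβpos
end

section
/- Let 𝔤 be a finite-dimensional complex simple Lie algebra with root system Φ, base Δ, and let α ∈ Δ be a long simple root; set Σ_q := {α} ∪ N(α). Then: (a) for every root β with n_α(β) = 0 and ht_{Σ_q}(β) = 1, one has β + α ∈ Φ and β − α ∉ Φ; (b) for every root δ with ht_{Σ_q}(δ) = 2, one has δ + α ∉ Φ. In terms of root spaces: ⁅𝔤_α, q_{-1}^V⁆ = 0, ⁅𝔤_α, q_2⁆ = 0, and ⁅𝔤_{-α}, q_{-2}⁆ = 0, where q_{±1}^V := ⊕{𝔤_{±β} : n_α(β)=0, ht_{Σ_q}(β)=1} and q_{±2} := ⊕_{ht_{Σ_q}(δ)=±2}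 𝔤_δ. -/
open scoped RealInnerProductSpace Classical

/-!
Pair everything with the coroot `α∨`. Since `α` is long, `α∨` takes values in `[-2, 2]` on roots and
attains `±2` only at `±α`. On a Dynkin neighbour of `α` it is a negative integer, hence `-1`, and
expanding a root `β` in simple roots gives `⟨β, α∨⟩ = 3 n_α(β) - ht_{Σ_q}(β)`. As `⟨α, α∨⟩ = 2`,
adding `α` to a root with positive pairing, or subtracting it from one with negative pairing, leaves
`Φ ∪ {0}`, so it remains to determine signs. In (b) the pairing is congruent to `1` modulo `3` and
greater than `-2`, hence positive.
-/

section Coroot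

variable {E : Type*} [NormedAddCommGroup E] [InnerProductSpace ℝ E] {α β : E}

/-- The coroot `α∨` of a vector `α`, as the linear form `β ↦ 2⟪β, α⟫ / ⟪α, α⟫`; it is `0` if
`α = 0`. -/
noncomputable def coroot (α : E) : E →ₗ[ℝ] ℝ := (2 / ⟪α, α⟫) • innerₗ E α

lemma coroot_apply (α β : E) : coroot α β = 2 * ⟪β, α⟫ / ⟪α, α⟫ := by
  simp only [coroot, LinearMap.smul_apply, innerₗ_apply_apply, smul_eq_mul, real_inner_comm α β]
  ring

lemma coroot_self (hα : α ≠ 0) : coroot α α = 2 := by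
  rw [coroot_apply, mul_div_cancel_right₀ _ (inner_self_ne_zero.2 hα)]

lemma neg_two_lt_coroot (hα : α ≠ 0) (hle : ⟪β, β⟫ ≤ ⟪α, α⟫) (hne : β ≠ -α) :
    -2 < coroot α β := by
  have hsum_pos : 0 < ⟪β + α, β + α⟫ :=
    real_inner_self_pos.2 fun hzero => hne (eq_neg_of_add_eq_zero_left hzero)
  rw [real_inner_add_add_self] at hsum_pos
  rw [coroot_apply, lt_div_iff₀ (real_inner_self_pos.2 hα)]
  linarith

lemma neg_two_le_coroot (hα : α ≠ 0) (hle : ⟪β, β⟫ ≤ ⟪α, α⟫) : -2 ≤ coroot α β := by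
  by_cases hβ : β = -α
  · rw [hβ, map_neg, coroot_self hα]
  · exact (neg_two_lt_coroot hα hle hβ).le

lemma coroot_le_two (hα : α ≠ 0) (hle : ⟪β, β⟫ ≤ ⟪α, α⟫) : coroot α β ≤ 2 := by
  have hneg : -2 ≤ coroot α (-β) := neg_two_le_coroot hα (by rwa [inner_neg_neg])
  rw [map_neg] at hneg
  exact neg_le_neg_iff.1 hneg

lemma coroot_lt_two (hα : α ≠ 0) (hle : ⟪β, β⟫ ≤ ⟪α, α⟫) (hne : β ≠ α) : coroot α β < 2 := by
  have hneg : -2 < coroot α (-β) :=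
    neg_two_lt_coroot hα (by rwa [inner_neg_neg]) (neg_injective.ne hne)
  rw [map_neg] at hneg
  exact neg_lt_neg_iff.1 hneg

variable {Φ : Set E}

lemma add_notMem_of_coroot_pos (hα : α ≠ 0) (hlong : ∀ γ ∈ Φ, ⟪γ, γ⟫ ≤ ⟪α, α⟫)
    (hβ : 0 < coroot α β) : β + α ∉ Φ := by
  intro hmem
  have hle := coroot_le_two hα (hlong _ hmem)
  rw [map_add, coroot_self hα] at hle
  linarith

lemma sub_notMem_of_coroot_neg (hα : α ≠ 0) (hlong : ∀ γ ∈ Φ, ⟪γ, γ⟫ ≤ ⟪α, α⟫)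
    (hβ : coroot α β < 0) : β - α ∉ Φ := by
  intro hmem
  have hge := neg_two_le_coroot hα (hlong _ hmem)
  rw [map_sub, coroot_self hα] at hge
  linarith

lemma neg_mem_of_reflection_mem (hα : α ≠ 0) (hrefl : α - coroot α α • α ∈ Φ) : -α ∈ Φ := by
  rwa [coroot_self hα, two_smul, sub_add_cancel_left] at hrefl

end Coroot

/-- `Δ` is a base of the set of roots `Φ`, and `n β γ` is the integer coefficient of `γ ∈ Δ` in the
root `β`; the values of `n` elsewhere are irrelevant. -/
structure IsRootBase {E : Type*} [AddCommGroup E] [Module ℝ E]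
    (Φ : Set E) (Δ : Finset E) (n : E → E → ℤ) : Prop where
  subset : (Δ : Set E) ⊆ Φ
  linearIndepOn : LinearIndepOn ℝ id (Δ : Set E)
  eq_sum : ∀ β ∈ Φ, β = ∑ γ ∈ Δ, (n β γ : ℝ) • γ
  sign : ∀ β ∈ Φ, (∀ γ ∈ Δ, 0 ≤ n β γ) ∨ (∀ γ ∈ Δ, n β γ ≤ 0)

namespace IsRootBase

variable {E : Type*} [AddCommGroup E] [Module ℝ E]
  {Φ : Set E} {Δ : Finset E} {n : E → E → ℤ} {α β γ δ : E}

lemma ne_zero (hbase : IsRootBase Φ Δ n) (hα : α ∈ Δ) : α ≠ 0 :=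
  hbase.linearIndepOn.ne_zero hα

lemma coeff_eq_of_eq_sum (hbase : IsRootBase Φ Δ n) (hβ : β ∈ Φ) {c : E → ℝ}
    (hsum : β = ∑ γ ∈ Δ, c γ • γ) (hδ : δ ∈ Δ) : (n β δ : ℝ) = c δ :=
  linearIndepOn_finset_iffₛ.1 hbase.linearIndepOn (fun γ => (n β γ : ℝ)) c
    ((hbase.eq_sum β hβ).symm.trans hsum) δ hδ

lemma coeff_of_mem (hbase : IsRootBase Φ Δ n) (hγ : γ ∈ Δ) (hδ : δ ∈ Δ) :
    n γ δ = if δ = γ then 1 else 0 := by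
  have hcoeff := hbase.coeff_eq_of_eq_sum (hbase.subset hγ)
    (c := fun η => if η = γ then 1 else 0) (by simp [hγ]) hδ
  exact_mod_cast hcoeff

lemma coeff_sub_smul (hbase : IsRootBase Φ Δ n) (hα : α ∈ Δ) (hβ : β ∈ Φ) {t : ℝ}
    (hmem : β - t • α ∈ Φ) (hδ : δ ∈ Δ) :
    (n (β - t • α) δ : ℝ) = n β δ - if δ = α then t else 0 := by
  refine hbase.coeff_eq_of_eq_sum hmem (c := fun η => n β η - if η = α then t else 0) ?_ hδ
  simp only [sub_smul, ite_smul, zero_smul, Finset.sum_sub_distrib, Finset.sum_ite_eq', hα,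
    if_true, ← hbase.eq_sum β hβ]

lemma coeff_neg_self (hbase : IsRootBase Φ Δ n) (hα : α ∈ Δ) (hneg : -α ∈ Φ) :
    n (-α) α = -1 := by
  have hsub : α - (2 : ℝ) • α = -α := by rw [two_smul, sub_add_cancel_left]
  have hcoeff := hbase.coeff_sub_smul hα (hbase.subset hα) (hsub ▸ hneg) hα
  rw [hsub, hbase.coeff_of_mem hα hα, if_pos rfl, if_pos rfl] at hcoeff
  norm_num at hcoeff
  exact_mod_cast hcoeff

lemma ne_neg (hbase : IsRootBase Φ Δ n) (hα : α ∈ Δ) (hγ : γ ∈ Δ) : γ ≠ -α := by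
  rintro rfl
  have hcoeff := hbase.coeff_of_mem hγ hα
  rw [hbase.coeff_neg_self hα (hbase.subset hγ)] at hcoeff
  split_ifs at hcoeff

end IsRootBase

section DynkinNbhd

variable {E : Type*} [NormedAddCommGroup E] [InnerProductSpace ℝ E]

/-- The set `Σ_q = {α} ∪ N(α)` formed by `α` and its neighbours in the Dynkin diagram of `Δ`. -/
noncomputable def dynkinNbhd (Δ : Finset E) (α : E) : Finset E :=
  insert α (Δ.filter fun γ => γ ≠ α ∧ ⟪γ, α⟫ ≠ 0)

/-- The height `ht_{Σ_q}(β)`: the sum of the coefficients of `β` along `Σ_q = dynkinNbhd Δ α`. -/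
noncomputable def nbhdHeight (Δ : Finset E) (n : E → E → ℤ) (α β : E) : ℤ :=
  ∑ γ ∈ dynkinNbhd Δ α, n β γ

lemma self_mem_dynkinNbhd (Δ : Finset E) (α : E) : α ∈ dynkinNbhd Δ α :=
  Finset.mem_insert_self _ _

lemma dynkinNbhd_subset {Δ : Finset E} {α : E} (hα : α ∈ Δ) : dynkinNbhd Δ α ⊆ Δ :=
  Finset.insert_subset hα (Finset.filter_subset _ _)

end DynkinNbhd

namespace IsRootBase

variable {E : Type*} [NormedAddCommGroup E] [InnerProductSpace ℝ E]
  {Φ : Set E} {Δ : Finset E} {n : E → E → ℤ} {α β γ δ : E}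

lemma coroot_eq_coeff_sub_coeff (hbase : IsRootBase Φ Δ n) (hα : α ∈ Δ) (hβ : β ∈ Φ)
    (hrefl : β - coroot α β • α ∈ Φ) :
    coroot α β = (n β α - n (β - coroot α β • α) α : ℤ) := by
  have hcoeff := hbase.coeff_sub_smul hα hβ hrefl hα
  rw [if_pos rfl] at hcoeff
  push_cast
  linarith

lemma coroot_nonpos (hbase : IsRootBase Φ Δ n) (hα : α ∈ Δ) (hγ : γ ∈ Δ) (hne : γ ≠ α)
    (hrefl : γ - coroot α γ • α ∈ Φ) : coroot α γ ≤ 0 := by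
  have hγΦ := hbase.subset hγ
  have hcoeff_γ : n (γ - coroot α γ • α) γ = 1 := by
    have hcoeff := hbase.coeff_sub_smul hα hγΦ hrefl hγ
    rw [if_neg hne, sub_zero, hbase.coeff_of_mem hγ hγ, if_pos rfl] at hcoeff
    exact_mod_cast hcoeff
  have hcoeff_α : 0 ≤ n (γ - coroot α γ • α) α := by
    rcases hbase.sign _ hrefl with hnonneg | hnonpos
    · exact hnonneg α hα
    · have := hnonpos γ hγ
      omega
  rw [hbase.coroot_eq_coeff_sub_coeff hα hγΦ hrefl, hbase.coeff_of_mem hγ hα, if_neg hne.symm]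
  exact_mod_cast (by omega)

lemma coroot_eq_neg_one_of_inner_ne_zero (hbase : IsRootBase Φ Δ n) (hα : α ∈ Δ)
    (hγ : γ ∈ Δ) (hne : γ ≠ α) (hle : ⟪γ, γ⟫ ≤ ⟪α, α⟫) (hrefl : γ - coroot α γ • α ∈ Φ)
    (hadj : ⟪γ, α⟫ ≠ 0) : coroot α γ = -1 := by
  have hα0 := hbase.ne_zero hα
  have hgt := neg_two_lt_coroot hα0 hle (hbase.ne_neg hα hγ)
  have hnonpos := hbase.coroot_nonpos hα hγ hne hrefl
  have hcoroot0 : coroot α γ ≠ 0 := by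
    rw [coroot_apply]
    exact div_ne_zero (mul_ne_zero two_ne_zero hadj) (inner_self_ne_zero.2 hα0)
  obtain ⟨m, hm⟩ : ∃ m : ℤ, coroot α γ = m :=
    ⟨_, hbase.coroot_eq_coeff_sub_coeff hα (hbase.subset hγ) hrefl⟩
  rw [hm] at hgt hnonpos hcoroot0 ⊢
  norm_cast at hgt hnonpos hcoroot0 ⊢
  omega

lemma coroot_of_mem_base (hbase : IsRootBase Φ Δ n) (hα : α ∈ Δ) (hγ : γ ∈ Δ)
    (hle : ⟪γ, γ⟫ ≤ ⟪α, α⟫) (hrefl : γ - coroot α γ • α ∈ Φ) :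
    coroot α γ = (if γ = α then 3 else 0) - if γ ∈ dynkinNbhd Δ α then 1 else 0 := by
  by_cases hγα : γ = α
  · subst hγα
    rw [coroot_self (hbase.ne_zero hα), if_pos rfl, if_pos (self_mem_dynkinNbhd Δ γ)]
    norm_num
  by_cases hadj : ⟪γ, α⟫ = 0
  · simp [coroot_apply, dynkinNbhd, hγα, hadj]
  · rw [hbase.coroot_eq_neg_one_of_inner_ne_zero hα hγ hγα hle hrefl hadj]
    simp [dynkinNbhd, hγ, hγα, hadj]

theorem coroot_eq_three_mul_coeff_sub_nbhdHeight (hbase : IsRootBase Φ Δ n) (hα : α ∈ Δ)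
    (hlong : ∀ γ ∈ Φ, ⟪γ, γ⟫ ≤ ⟪α, α⟫) (hrefl : ∀ β ∈ Φ, β - coroot α β • α ∈ Φ)
    (hβ : β ∈ Φ) : coroot α β = (3 * n β α - nbhdHeight Δ n α β : ℤ) := by
  have hsimple : ∀ γ ∈ Δ, coroot α γ =
      (if γ = α then 3 else 0) - if γ ∈ dynkinNbhd Δ α then 1 else 0 := fun γ hγ =>
    hbase.coroot_of_mem_base hα hγ (hlong γ (hbase.subset hγ)) (hrefl γ (hbase.subset hγ))
  calc coroot α β
      = ∑ γ ∈ Δ, (n β γ : ℝ) * coroot α γ := by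
        conv_lhs => rw [hbase.eq_sum β hβ]
        simp only [map_sum, map_smul, smul_eq_mul]
    _ = ∑ γ ∈ Δ, ((if γ = α then (n β γ : ℝ) * 3 else 0) -
          if γ ∈ dynkinNbhd Δ α then (n β γ : ℝ) else 0) :=
        Finset.sum_congr rfl fun γ hγ => by
          rw [hsimple γ hγ, mul_sub, mul_ite, mul_ite, mul_zero, mul_one]
    _ = (3 * n β α - nbhdHeight Δ n α β : ℤ) := by
        rw [Finset.sum_sub_distrib, Finset.sum_ite_eq', if_pos hα, Finset.sum_ite_mem,
          Finset.inter_eq_right.2 (dynkinNbhd_subset hα), nbhdHeight]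
        push_cast
        ring

lemma nbhdHeight_self (hbase : IsRootBase Φ Δ n) (hα : α ∈ Δ)
    (hlong : ∀ γ ∈ Φ, ⟪γ, γ⟫ ≤ ⟪α, α⟫) (hrefl : ∀ β ∈ Φ, β - coroot α β • α ∈ Φ) :
    nbhdHeight Δ n α α = 1 := by
  have hcoroot := hbase.coroot_eq_three_mul_coeff_sub_nbhdHeight hα hlong hrefl (hbase.subset hα)
  rw [coroot_self (hbase.ne_zero hα), hbase.coeff_of_mem hα hα, if_pos rfl] at hcoroot
  norm_cast at hcoroot
  omega

lemma nbhdHeight_neg_self (hbase : IsRootBase Φ Δ n) (hα : α ∈ Δ)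
    (hlong : ∀ γ ∈ Φ, ⟪γ, γ⟫ ≤ ⟪α, α⟫) (hrefl : ∀ β ∈ Φ, β - coroot α β • α ∈ Φ) :
    nbhdHeight Δ n α (-α) = -1 := by
  have hα0 := hbase.ne_zero hα
  have hneg : -α ∈ Φ := neg_mem_of_reflection_mem hα0 (hrefl α (hbase.subset hα))
  have hcoroot := hbase.coroot_eq_three_mul_coeff_sub_nbhdHeight hα hlong hrefl hneg
  rw [map_neg, coroot_self hα0, hbase.coeff_neg_self hα hneg] at hcoroot
  norm_cast at hcoroot
  omega

lemma coroot_pos_of_nbhdHeight_eq_two (hbase : IsRootBase Φ Δ n) (hα : α ∈ Δ)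
    (hlong : ∀ γ ∈ Φ, ⟪γ, γ⟫ ≤ ⟪α, α⟫) (hrefl : ∀ β ∈ Φ, β - coroot α β • α ∈ Φ)
    (hδ : δ ∈ Φ) (hht : nbhdHeight Δ n α δ = 2) : 0 < coroot α δ := by
  have hne : δ ≠ -α := by
    rintro rfl
    have := hbase.nbhdHeight_neg_self hα hlong hrefl
    omega
  have hgt := neg_two_lt_coroot (hbase.ne_zero hα) (hlong δ hδ) hne
  rw [hbase.coroot_eq_three_mul_coeff_sub_nbhdHeight hα hlong hrefl hδ, hht] at hgt ⊢
  norm_cast at hgt ⊢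
  omega

lemma coroot_neg_of_nbhdHeight_eq_neg_two (hbase : IsRootBase Φ Δ n) (hα : α ∈ Δ)
    (hlong : ∀ γ ∈ Φ, ⟪γ, γ⟫ ≤ ⟪α, α⟫) (hrefl : ∀ β ∈ Φ, β - coroot α β • α ∈ Φ)
    (hδ : δ ∈ Φ) (hht : nbhdHeight Δ n α δ = -2) : coroot α δ < 0 := by
  have hne : δ ≠ α := by
    rintro rfl
    have := hbase.nbhdHeight_self hα hlong hrefl
    omega
  have hlt := coroot_lt_two (hbase.ne_zero hα) (hlong δ hδ) hne
  rw [hbase.coroot_eq_three_mul_coeff_sub_nbhdHeight hα hlong hrefl hδ, hht] at hlt ⊢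
  norm_cast at hlt ⊢
  omega

end IsRootBase

section RootSpaces

variable {R L : Type*} [CommRing R] [LieRing L] [LieAlgebra R L]

lemma lie_eq_zero_of_mem_biSup {M ι : Type*} [AddCommGroup M] [Module R M] [LieRingModule L M]
    [LieModule R L M] {V : ι → Submodule R M} {S : Set ι} {x : L}
    (hS : ∀ i ∈ S, ∀ y ∈ V i, ⁅x, y⁆ = 0) : ∀ y ∈ ⨆ i ∈ S, V i, ⁅x, y⁆ = 0 := by
  have hker : ⨆ i ∈ S, V i ≤ LinearMap.ker (LieModule.toEnd R L M x) := iSup₂_le hS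
  exact fun y hy => LinearMap.mem_ker.1 (hker hy)

variable {E : Type*} [NormedAddCommGroup E] [InnerProductSpace ℝ E] {Φ : Set E} {α β : E}
  {g : E → Submodule R L}

lemma lie_eq_zero_of_coroot_pos
    (hgg : ∀ β ∈ Φ, ∀ γ ∈ Φ, β + γ ∉ Φ → β + γ ≠ 0 → ∀ x ∈ g β, ∀ y ∈ g γ, ⁅x, y⁆ = 0)
    (hα : α ∈ Φ) (hα0 : α ≠ 0) (hlong : ∀ γ ∈ Φ, ⟪γ, γ⟫ ≤ ⟪α, α⟫) (hβ : β ∈ Φ)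
    (hpos : 0 < coroot α β) : ∀ x ∈ g α, ∀ y ∈ g β, ⁅x, y⁆ = 0 := by
  refine hgg α hα β hβ ?_ fun hzero => ?_
  · rw [add_comm]
    exact add_notMem_of_coroot_pos hα0 hlong hpos
  · rw [eq_neg_of_add_eq_zero_right hzero, map_neg, coroot_self hα0] at hpos
    linarith

lemma lie_eq_zero_of_coroot_neg
    (hgg : ∀ β ∈ Φ, ∀ γ ∈ Φ, β + γ ∉ Φ → β + γ ≠ 0 → ∀ x ∈ g β, ∀ y ∈ g γ, ⁅x, y⁆ = 0)
    (hα : -α ∈ Φ) (hα0 : α ≠ 0) (hlong : ∀ γ ∈ Φ, ⟪γ, γ⟫ ≤ ⟪α, α⟫) (hβ : β ∈ Φ)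
    (hneg : coroot α β < 0) : ∀ x ∈ g (-α), ∀ y ∈ g β, ⁅x, y⁆ = 0 := by
  refine hgg (-α) hα β hβ ?_ fun hzero => ?_
  · rw [neg_add_eq_sub]
    exact sub_notMem_of_coroot_neg hα0 hlong hneg
  · rw [← neg_add_eq_zero.1 hzero, coroot_self hα0] at hneg
    linarith

end RootSpaces

theorem long_root_space_brackets_vanish_general
    {E : Type*} [NormedAddCommGroup E] [InnerProductSpace ℝ E]
    {R L : Type*} [CommRing R] [LieRing L] [LieAlgebra R L]
    {Φ : Set E} {Δ : Finset E} {n : E → E → ℤ} (hbase : IsRootBase Φ Δ n)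
    {α : E} (hα : α ∈ Δ) (hlong : ∀ γ ∈ Φ, ⟪γ, γ⟫ ≤ ⟪α, α⟫)
    (hrefl : ∀ β ∈ Φ, β - coroot α β • α ∈ Φ) {g : E → Submodule R L}
    (hgg : ∀ β ∈ Φ, ∀ γ ∈ Φ, β + γ ∉ Φ → β + γ ≠ 0 → ∀ x ∈ g β, ∀ y ∈ g γ, ⁅x, y⁆ = 0) :
    (∀ β ∈ Φ, n β α = 0 → nbhdHeight Δ n α β = 1 → β + α ∈ Φ ∧ β - α ∉ Φ) ∧
    (∀ δ ∈ Φ, nbhdHeight Δ n α δ = 2 → δ + α ∉ Φ) ∧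
    (∀ x ∈ g α, ∀ y ∈ ⨆ β ∈ {β | β ∈ Φ ∧ n β α = 0 ∧ nbhdHeight Δ n α β = -1}, g β,
      ⁅x, y⁆ = 0) ∧
    (∀ x ∈ g α, ∀ y ∈ ⨆ δ ∈ {δ | δ ∈ Φ ∧ nbhdHeight Δ n α δ = 2}, g δ, ⁅x, y⁆ = 0) ∧
    (∀ x ∈ g (-α), ∀ y ∈ ⨆ δ ∈ {δ | δ ∈ Φ ∧ nbhdHeight Δ n α δ = -2}, g δ, ⁅x, y⁆ = 0) := by
  have hαΦ : α ∈ Φ := hbase.subset hα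
  have hα0 : α ≠ 0 := hbase.ne_zero hα
  have hcoroot {β : E} (hβ : β ∈ Φ) :=
    hbase.coroot_eq_three_mul_coeff_sub_nbhdHeight hα hlong hrefl hβ
  have hpos {δ : E} := hbase.coroot_pos_of_nbhdHeight_eq_two (δ := δ) hα hlong hrefl
  have hneg {δ : E} := hbase.coroot_neg_of_nbhdHeight_eq_neg_two (δ := δ) hα hlong hrefl
  refine ⟨fun β hβ hn hht => ?_, fun δ hδ hht => add_notMem_of_coroot_pos hα0 hlong (hpos hδ hht),
    fun x hx => lie_eq_zero_of_mem_biSup fun β ⟨hβ, hn, hht⟩ => ?_,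
    fun x hx => lie_eq_zero_of_mem_biSup fun δ ⟨hδ, hht⟩ => ?_,
    fun x hx => lie_eq_zero_of_mem_biSup fun δ ⟨hδ, hht⟩ => ?_⟩
  · have hcoroot_β : coroot α β = -1 := by simp [hcoroot hβ, hn, hht]
    refine ⟨?_, sub_notMem_of_coroot_neg hα0 hlong (by linarith)⟩
    have hreflected := hrefl β hβ
    rwa [hcoroot_β, neg_one_smul, sub_neg_eq_add] at hreflected
  · exact lie_eq_zero_of_coroot_pos hgg hαΦ hα0 hlong hβ (by simp [hcoroot hβ, hn, hht]) x hx
  · exact lie_eq_zero_of_coroot_pos hgg hαΦ hα0 hlong hδ (hpos hδ hht) x hx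
  · exact lie_eq_zero_of_coroot_neg hgg (neg_mem_of_reflection_mem hα0 (hrefl α hαΦ)) hα0 hlong hδ
      (hneg hδ hht) x hx

/-- Let `𝔤 = L` be a finite-dimensional complex simple Lie algebra with root system `Φ`
(realized in a real inner product space `E`, with root spaces `g β` and root space
decomposition), base `Δ`, and let `α ∈ Δ` be a long simple root; set
`Σ_q := {α} ∪ N(α)`.  Then:
(a) for every root `β` with `n_α(β) = 0` and `ht_{Σ_q}(β) = 1`, one has `β + α ∈ Φ` and
`β − α ∉ Φ`;
(b) for every root `δ` with `ht_{Σ_q}(δ) = 2`, one has `δ + α ∉ Φ`.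
In terms of root spaces: `⁅𝔤_α, q_{-1}^V⁆ = 0`, `⁅𝔤_α, q_2⁆ = 0` and
`⁅𝔤_{-α}, q_{-2}⁆ = 0`, where `q_{±1}^V := ⊕{𝔤_{±β} : n_α(β)=0, ht_{Σ_q}(β)=1}` and
`q_{±2} := ⊕_{ht_{Σ_q}(δ)=±2} 𝔤_δ`. -/
theorem long_root_space_brackets_vanish
    {E : Type*} [NormedAddCommGroup E] [InnerProductSpace ℝ E]
    {L : Type*} [LieRing L] [LieAlgebra ℂ L] [FiniteDimensional ℂ L]
    [LieAlgebra.IsSimple ℂ L]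
    (Φ : Finset E)
    (hΦ0 : (0 : E) ∉ Φ)
    (hspan : Submodule.span ℝ (Φ : Set E) = ⊤)
    (hrefl : ∀ α ∈ Φ, ∀ β ∈ Φ, β - (2 * ⟪β, α⟫ / ⟪α, α⟫) • α ∈ Φ)
    (hcrys : ∀ α ∈ Φ, ∀ β ∈ Φ, ∃ m : ℤ, 2 * ⟪β, α⟫ / ⟪α, α⟫ = (m : ℝ))
    (hred : ∀ α ∈ Φ, ∀ t : ℝ, t • α ∈ Φ → t = 1 ∨ t = -1)
    (hirr : ∀ S : Set E,
      (∀ β ∈ Φ, ∀ γ ∈ Φ, β ∈ S → ⟪β, γ⟫ ≠ 0 → γ ∈ S) →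
      (∃ β ∈ Φ, β ∈ S) → ∀ β ∈ Φ, β ∈ S)
    (Δ : Finset E) (hΔΦ : (Δ : Set E) ⊆ (Φ : Set E))
    (hΔli : LinearIndependent ℝ (fun γ : Δ => (γ : E)))
    (n : E → E → ℤ)
    (hn : ∀ β ∈ Φ, β = ∑ γ ∈ Δ, (n β γ : ℝ) • γ)
    (hsign : ∀ β ∈ Φ, (∀ γ ∈ Δ, 0 ≤ n β γ) ∨ (∀ γ ∈ Δ, n β γ ≤ 0))
    -- the Cartan subalgebra and the root space decomposition
    (h : Submodule ℂ L) (g : E → Submodule ℂ L)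
    (habel : ∀ x ∈ h, ∀ y ∈ h, ⁅x, y⁆ = 0)
    (hgne : ∀ β ∈ Φ, g β ≠ ⊥)
    (hhg : ∀ β ∈ Φ, ∀ x ∈ h, ∀ y ∈ g β, ⁅x, y⁆ ∈ g β)
    (hgg : ∀ β ∈ Φ, ∀ γ ∈ Φ, ∀ x ∈ g β, ∀ y ∈ g γ,
      (β + γ ∈ Φ → ⁅x, y⁆ ∈ g (β + γ)) ∧ (β + γ = 0 → ⁅x, y⁆ ∈ h) ∧
      (β + γ ∉ Φ → β + γ ≠ 0 → ⁅x, y⁆ = 0))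
    (hdec : h ⊔ (⨆ β ∈ Φ, g β) = ⊤)
    (hindh : Disjoint h (⨆ β ∈ Φ, g β))
    (hindg : ∀ β ∈ Φ, Disjoint (g β) (h ⊔ ⨆ γ ∈ Φ.erase β, g γ))
    -- the long simple root `α`, its Dynkin neighbors, `Σ_q` and the height `ht_{Σ_q}`
    (α : E) (hαΔ : α ∈ Δ)
    (hlong : ∀ γ ∈ Φ, ⟪γ, γ⟫ ≤ ⟪α, α⟫)
    (Nbr : Finset E) (hNbr : Nbr = Δ.filter fun γ => γ ≠ α ∧ ⟪γ, α⟫ ≠ 0)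
    (Sq : Finset E) (hSq : Sq = insert α Nbr)
    (htq : E → ℤ) (hhtq : ∀ β, htq β = ∑ γ ∈ Sq, n β γ)
    -- the subspaces `q_{±1}^V` and `q_{±2}`
    (q1V qm1V q2 qm2 : Submodule ℂ L)
    (hq1V : q1V = ⨆ β ∈ {β : E | β ∈ Φ ∧ n β α = 0 ∧ htq β = 1}, g β)
    (hqm1V : qm1V = ⨆ β ∈ {β : E | β ∈ Φ ∧ n β α = 0 ∧ htq β = -1}, g β)
    (hq2 : q2 = ⨆ δ ∈ {δ : E | δ ∈ Φ ∧ htq δ = 2}, g δ)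
    (hqm2 : qm2 = ⨆ δ ∈ {δ : E | δ ∈ Φ ∧ htq δ = -2}, g δ) :
    -- (a)
    (∀ β ∈ Φ, n β α = 0 → htq β = 1 → (β + α ∈ Φ ∧ β - α ∉ Φ)) ∧
    -- (b)
    (∀ δ ∈ Φ, htq δ = 2 → δ + α ∉ Φ) ∧
    -- in terms of root spaces
    (∀ x ∈ g α, ∀ y ∈ qm1V, ⁅x, y⁆ = 0) ∧
    (∀ x ∈ g α, ∀ y ∈ q2, ⁅x, y⁆ = 0) ∧
    (∀ x ∈ g (-α), ∀ y ∈ qm2, ⁅x, y⁆ = 0) := by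
  subst hNbr hSq hqm1V hq2 hqm2
  obtain rfl : htq = nbhdHeight Δ n α := funext hhtq
  exact long_root_space_brackets_vanish_general (Φ := Φ) ⟨hΔΦ, hΔli, hn, hsign⟩ hαΔ hlong
    (fun β hβ => coroot_apply α β ▸ hrefl α (hΔΦ hαΔ) β hβ)
    fun β hβ γ hγ hadd hne x hx y hy => (hgg β hβ γ hγ x hx y hy).2.2 hadd hne
end

section
/- Let 𝔤 be a finite-dimensional complex simple Lie algebra with root system Φ, base Δ, and let α ∈ Δ be a long simple root; set Σ_q := {α} ∪ N(α) and write ⟨β, α^∨⟩ := 2(β,α)/(α,α). Then: (a) every root β with ht_{Σ_q}(β) = 1 is either equal to α, in which case ⟨β,α^∨⟩ = 2, or satisfies n_α(β) = 0 and ⟨β,α^∨⟩ = −1; (b) every root δ with ht_{Σ_q}(δ) = 2 satisfies ⟨δ,α^∨⟩ = 1. In particular β(H_α) ≠ 0 for every root β with ht_{Σ_q}(β) ∈ {1,2}, where H_α is the element of the Cartan subalgebra representing α via the Killing form. -/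
open scoped RealInnerProductSpace Classical

/-!
Pairing the expansion `β = ∑ n_γ γ` with `α^∨` kills every simple root outside `{α} ∪ N(α)`.
Distinct simple roots form non-acute angles and `α` is long, so the Cauchy–Schwarz inequality
leaves only `-1` for the pairing of a neighbour with `α^∨`, and therefore
`⟨β, α^∨⟩ = 2 n_α - ∑_{γ ∈ N(α)} n_γ = 3 n_α - ht β`.
The same inequality gives `|3 n_α - ht β| ≤ 2`, with the values `2` and `-2` attained only at `α`
and `-α`. For height `1` or `2` this leaves `n_α ∈ {0, 1}`, and `-α` has coefficient `-1`.
-/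

section CorootPairing

variable {E : Type*} [NormedAddCommGroup E] [InnerProductSpace ℝ E] {α β : E}

/-- The pairing `⟨β, α^∨⟩ = 2 (β, α) / (α, α)` of a vector `β` with the coroot of `α`,
with the root whose coroot is taken as first argument. It is `0` if `α = 0`. -/
noncomputable def corootPairing (α β : E) : ℝ :=
  2 * ⟪β, α⟫ / ⟪α, α⟫

lemma corootPairing_self (hα : α ≠ 0) : corootPairing α α = 2 :=
  mul_div_cancel_right₀ 2 (inner_self_ne_zero.2 hα)

lemma corootPairing_neg_right (α β : E) : corootPairing α (-β) = -corootPairing α β := by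
  rw [corootPairing, corootPairing, inner_neg_left, mul_neg, neg_div]

lemma corootPairing_eq_zero_of_inner_eq_zero (h : ⟪β, α⟫ = 0) : corootPairing α β = 0 := by
  rw [corootPairing, h, mul_zero, zero_div]

lemma corootPairing_sum_smul (α : E) (s : Finset E) (c : E → ℝ) :
    corootPairing α (∑ γ ∈ s, c γ • γ) = ∑ γ ∈ s, c γ * corootPairing α γ := by
  simp only [corootPairing, sum_inner, real_inner_smul_left, Finset.mul_sum, Finset.sum_div]
  exact Finset.sum_congr rfl fun γ _ => by ring

lemma abs_corootPairing_le_two (hβ : ‖β‖ ≤ ‖α‖) : |corootPairing α β| ≤ 2 := by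
  have cauchy_schwarz : |⟪β, α⟫| ≤ ⟪α, α⟫ :=
    calc |⟪β, α⟫| ≤ ‖β‖ * ‖α‖ := abs_real_inner_le_norm β α
      _ ≤ ‖α‖ * ‖α‖ := by gcongr
      _ = ⟪α, α⟫ := (real_inner_self_eq_norm_mul_norm α).symm
  rw [corootPairing, abs_div, abs_mul, abs_two, abs_of_nonneg real_inner_self_nonneg]
  exact div_le_of_le_mul₀ real_inner_self_nonneg zero_le_two (by gcongr)

lemma eq_of_corootPairing_eq_two (hβ : ‖β‖ ≤ ‖α‖) (h : corootPairing α β = 2) : β = α := by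
  have hα : ⟪α, α⟫ ≠ 0 := by
    intro inner_self_eq
    rw [corootPairing, inner_self_eq, div_zero] at h
    exact two_ne_zero h.symm
  have inner_eq : ⟪β, α⟫ = ‖α‖ ^ 2 := by
    rw [corootPairing, div_eq_iff hα, real_inner_self_eq_norm_sq] at h
    linarith
  exact eq_of_norm_le_re_inner_eq_norm_sq (𝕜 := ℝ) hβ inner_eq

lemma eq_neg_of_corootPairing_eq_neg_two (hβ : ‖β‖ ≤ ‖α‖) (h : corootPairing α β = -2) :
    β = -α :=
  neg_eq_iff_eq_neg.1 <| eq_of_corootPairing_eq_two (by rwa [norm_neg]) <| by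
    rw [corootPairing_neg_right, h, neg_neg]

lemma corootPairing_eq_neg_one_of_neg (hβ : ‖β‖ ≤ ‖α‖) (hint : ∃ m : ℤ, corootPairing α β = m)
    (hneg : corootPairing α β < 0) (hne : β ≠ -α) : corootPairing α β = -1 := by
  obtain ⟨m, hm⟩ := hint
  have lower : -2 ≤ m := by
    have := (abs_le.1 (abs_corootPairing_le_two hβ)).1
    rw [hm] at this
    exact_mod_cast this
  have upper : m < 0 := by
    rw [hm] at hneg
    exact_mod_cast hneg
  have ne_neg_two : m ≠ -2 := by
    rintro rfl
    exact hne (eq_neg_of_corootPairing_eq_neg_two hβ (by rw [hm]; norm_num))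
  obtain rfl : m = -1 := by omega
  rw [hm]
  norm_num

lemma eq_zero_or_eq_one_of_corootPairing_eq_three_mul_sub {k h : ℤ} (hβ : ‖β‖ ≤ ‖α‖)
    (hh : h = 1 ∨ h = 2) (hk : corootPairing α β = 3 * k - h) : k = 0 ∨ k = 1 := by
  have bound : |3 * k - h| ≤ 2 := by
    have := abs_corootPairing_le_two hβ
    rw [hk] at this
    exact_mod_cast this
  rw [abs_le] at bound
  omega

lemma eq_or_eq_zero_of_corootPairing_eq_three_mul_sub_one {k : ℤ} (hβ : ‖β‖ ≤ ‖α‖)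
    (hk : corootPairing α β = 3 * k - 1) :
    (β = α ∧ corootPairing α β = 2) ∨ (k = 0 ∧ corootPairing α β = -1) := by
  obtain rfl | rfl :=
    eq_zero_or_eq_one_of_corootPairing_eq_three_mul_sub (h := 1) hβ (.inl rfl)
      (by exact_mod_cast hk)
  · exact .inr ⟨rfl, by rw [hk]; norm_num⟩
  · have pairing_eq_two : corootPairing α β = 2 := by rw [hk]; norm_num
    exact .inl ⟨eq_of_corootPairing_eq_two hβ pairing_eq_two, pairing_eq_two⟩

lemma corootPairing_eq_one_of_eq_three_mul_sub_two {k : ℤ} (hβ : ‖β‖ ≤ ‖α‖)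
    (hk : corootPairing α β = 3 * k - 2) (hk_neg : β = -α → k = -1) :
    corootPairing α β = 1 := by
  obtain rfl | rfl :=
    eq_zero_or_eq_one_of_corootPairing_eq_three_mul_sub (h := 2) hβ (.inr rfl)
      (by exact_mod_cast hk)
  · have eq_neg : β = -α := eq_neg_of_corootPairing_eq_neg_two hβ (by rw [hk]; norm_num)
    exact absurd (hk_neg eq_neg) (by norm_num)
  · rw [hk]
    norm_num

end CorootPairing

section Coefficients

variable {R V : Type*} [Ring R] [AddCommGroup V] [Module R V] {Δ : Finset V} {α γ : V}

lemma coeff_eq_neg_one_of_neg_eq_sum (hΔ : LinearIndepOn R id (Δ : Set V)) (hα : α ∈ Δ)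
    {f : V → R} (h : -α = ∑ δ ∈ Δ, f δ • δ) : f α = -1 := by
  have expansion : ∑ δ ∈ Δ, (Pi.single α (-1) : V → R) δ • δ = -α := by
    simp [Pi.single_apply, ite_smul, hα]
  have := linearIndepOn_finset_iffₛ.1 hΔ f (Pi.single α (-1)) (h.symm.trans expansion.symm) α hα
  rwa [Pi.single_eq_same] at this

lemma ne_neg_of_mem_of_linearIndepOn [Nontrivial R] (hΔ : LinearIndepOn R id (Δ : Set V))
    (hα : α ∈ Δ) (hγ : γ ∈ Δ) (hne : γ ≠ α) : γ ≠ -α := by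
  intro hγα
  have expansion : -α = ∑ δ ∈ Δ, (Pi.single γ 1 : V → R) δ • δ := by
    simp [Pi.single_apply, ite_smul, hγ, ← hγα]
  have := coeff_eq_neg_one_of_neg_eq_sum hΔ hα expansion
  rw [Pi.single_eq_of_ne hne.symm] at this
  exact neg_ne_zero.2 one_ne_zero this.symm

lemma nonpos_of_sub_smul_eq_sum [PartialOrder R] [IsStrictOrderedRing R]
    (hΔ : LinearIndepOn R id (Δ : Set V)) (hα : α ∈ Δ) (hγ : γ ∈ Δ) (hne : γ ≠ α)
    {c : R} {f : V → R} (h : γ - c • α = ∑ δ ∈ Δ, f δ • δ)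
    (hsign : (∀ δ ∈ Δ, 0 ≤ f δ) ∨ (∀ δ ∈ Δ, f δ ≤ 0)) : c ≤ 0 := by
  have expansion :
      ∑ δ ∈ Δ, (Pi.single γ 1 - Pi.single α c : V → R) δ • δ = γ - c • α := by
    simp [Pi.single_apply, ite_smul, sub_smul, hα, hγ]
  have coeff := linearIndepOn_finset_iffₛ.1 hΔ f _ (h.symm.trans expansion.symm)
  have coeff_γ : f γ = 1 := by simpa [hne] using coeff γ hγ
  have coeff_α : f α = -c := by simpa [hne.symm] using coeff α hα
  rcases hsign with nonneg | nonpos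
  · exact neg_nonneg.1 (coeff_α ▸ nonneg α hα)
  · exact absurd (coeff_γ ▸ nonpos γ hγ) zero_lt_one.not_ge

end Coefficients

section SimpleNeighbors

variable {E : Type*} [NormedAddCommGroup E] [InnerProductSpace ℝ E] {Δ : Finset E} {α : E}

/-- The set `N(α)` of neighbours of `α` in the Dynkin diagram with vertex set `Δ`. -/
noncomputable def simpleNeighbors (Δ : Finset E) (α : E) : Finset E :=
  Δ.filter fun γ => γ ≠ α ∧ ⟪γ, α⟫ ≠ 0

/-- The height `ht_{Σ_q}`, for `Σ_q = {α} ∪ N(α)`, of the vector with coefficients `c` with respect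
to `Δ`. It depends on the coefficient function rather than on the vector; coefficients may lie in
`ℤ` or in `ℝ`. -/
noncomputable def starHeight {R : Type*} [AddCommMonoid R] (Δ : Finset E) (α : E) (c : E → R) : R :=
  ∑ γ ∈ insert α (simpleNeighbors Δ α), c γ

lemma mem_simpleNeighbors {γ : E} :
    γ ∈ simpleNeighbors Δ α ↔ γ ∈ Δ ∧ γ ≠ α ∧ ⟪γ, α⟫ ≠ 0 :=
  Finset.mem_filter

lemma notMem_simpleNeighbors_self (Δ : Finset E) (α : E) : α ∉ simpleNeighbors Δ α :=
  fun h => (mem_simpleNeighbors.1 h).2.1 rfl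

lemma starHeight_eq_add_sum {R : Type*} [AddCommMonoid R] (Δ : Finset E) (α : E) (c : E → R) :
    starHeight Δ α c = c α + ∑ γ ∈ simpleNeighbors Δ α, c γ :=
  Finset.sum_insert (notMem_simpleNeighbors_self Δ α)

lemma intCast_starHeight {R : Type*} [Ring R] (Δ : Finset E) (α : E) (c : E → ℤ) :
    ((starHeight Δ α c : ℤ) : R) = starHeight Δ α fun γ => (c γ : R) :=
  Int.cast_sum _ c

lemma insert_simpleNeighbors_subset (hα : α ∈ Δ) : insert α (simpleNeighbors Δ α) ⊆ Δ :=
  Finset.insert_subset hα (Finset.filter_subset _ Δ)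

lemma corootPairing_eq_zero_of_notMem_insert {γ : E} (hγ : γ ∈ Δ)
    (h : γ ∉ insert α (simpleNeighbors Δ α)) : corootPairing α γ = 0 := by
  simp only [Finset.mem_insert, mem_simpleNeighbors] at h
  exact corootPairing_eq_zero_of_inner_eq_zero (by tauto)

/- The `3` is `⟨α, α^∨⟩ + 1`: the height counts `α` along with its neighbours. -/
lemma corootPairing_sum_smul_eq_three_mul_sub (hα : α ∈ Δ) (hα0 : α ≠ 0)
    (hnbr : ∀ γ ∈ simpleNeighbors Δ α, corootPairing α γ = -1) (c : E → ℝ) :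
    corootPairing α (∑ γ ∈ Δ, c γ • γ) = 3 * c α - starHeight Δ α c :=
  calc corootPairing α (∑ γ ∈ Δ, c γ • γ)
      = ∑ γ ∈ Δ, c γ * corootPairing α γ := corootPairing_sum_smul α Δ c
    _ = starHeight Δ α fun γ => c γ * corootPairing α γ := by
        refine (Finset.sum_subset (insert_simpleNeighbors_subset hα) fun γ hγ hγ' => ?_).symm
        rw [corootPairing_eq_zero_of_notMem_insert hγ hγ', mul_zero]
    _ = c α * 2 + ∑ γ ∈ simpleNeighbors Δ α, c γ * -1 := by
        rw [starHeight_eq_add_sum, corootPairing_self hα0]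
        exact congrArg _ (Finset.sum_congr rfl fun γ hγ => by rw [hnbr γ hγ])
    _ = 3 * c α - starHeight Δ α c := by
        rw [starHeight_eq_add_sum, ← Finset.sum_mul]
        ring

lemma corootPairing_eq_neg_one_of_mem_simpleNeighbors {γ : E}
    (hΔ : LinearIndepOn ℝ id (Δ : Set E)) (hα : α ∈ Δ) (hγ : γ ∈ simpleNeighbors Δ α)
    (hlong : ‖γ‖ ≤ ‖α‖) (hint : ∃ m : ℤ, corootPairing α γ = m) {f : E → ℝ}
    (hrefl : γ - corootPairing α γ • α = ∑ δ ∈ Δ, f δ • δ)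
    (hsign : (∀ δ ∈ Δ, 0 ≤ f δ) ∨ (∀ δ ∈ Δ, f δ ≤ 0)) : corootPairing α γ = -1 := by
  obtain ⟨hγΔ, hne, hinner⟩ := mem_simpleNeighbors.1 hγ
  have pairing_ne_zero : corootPairing α γ ≠ 0 :=
    div_ne_zero (mul_ne_zero two_ne_zero hinner) (inner_self_ne_zero.2 (hΔ.ne_zero hα))
  have pairing_nonpos : corootPairing α γ ≤ 0 :=
    nonpos_of_sub_smul_eq_sum hΔ hα hγΔ hne hrefl hsign
  exact corootPairing_eq_neg_one_of_neg hlong hint (pairing_nonpos.lt_of_ne pairing_ne_zero)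
    (ne_neg_of_mem_of_linearIndepOn hΔ hα hγΔ hne)

end SimpleNeighbors

section LongSimpleRoot

variable {E : Type*} [NormedAddCommGroup E] [InnerProductSpace ℝ E] {Φ : Set E} {Δ : Finset E}
  {α : E} {n : E → E → ℤ}

lemma corootPairing_eq_three_mul_coeff_sub_starHeight
    (hrefl : ∀ β ∈ Φ, β - corootPairing α β • α ∈ Φ)
    (hcrys : ∀ β ∈ Φ, ∃ m : ℤ, corootPairing α β = m)
    (hΔΦ : (Δ : Set E) ⊆ Φ) (hΔli : LinearIndepOn ℝ id (Δ : Set E))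
    (hn : ∀ β ∈ Φ, β = ∑ γ ∈ Δ, (n β γ : ℝ) • γ)
    (hsign : ∀ β ∈ Φ, (∀ γ ∈ Δ, 0 ≤ n β γ) ∨ (∀ γ ∈ Δ, n β γ ≤ 0))
    (hαΔ : α ∈ Δ) (hlong : ∀ γ ∈ Φ, ‖γ‖ ≤ ‖α‖) {β : E} (hβ : β ∈ Φ) :
    corootPairing α β = 3 * n β α - (starHeight Δ α (n β) : ℤ) := by
  have neighbor_pairing : ∀ γ ∈ simpleNeighbors Δ α, corootPairing α γ = -1 := by
    intro γ hγ
    have hγΦ : γ ∈ Φ := hΔΦ (mem_simpleNeighbors.1 hγ).1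
    have reflection_mem := hrefl γ hγΦ
    exact corootPairing_eq_neg_one_of_mem_simpleNeighbors hΔli hαΔ hγ (hlong γ hγΦ)
      (hcrys γ hγΦ) (hn _ reflection_mem) (by exact_mod_cast hsign _ reflection_mem)
  conv_lhs => rw [hn β hβ]
  rw [corootPairing_sum_smul_eq_three_mul_sub hαΔ (hΔli.ne_zero hαΔ) neighbor_pairing,
    intCast_starHeight]

theorem pairing_with_long_coroot_on_low_heights_general
    (hrefl : ∀ β ∈ Φ, β - corootPairing α β • α ∈ Φ)
    (hcrys : ∀ β ∈ Φ, ∃ m : ℤ, corootPairing α β = m)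
    (hΔΦ : (Δ : Set E) ⊆ Φ) (hΔli : LinearIndepOn ℝ id (Δ : Set E))
    (hn : ∀ β ∈ Φ, β = ∑ γ ∈ Δ, (n β γ : ℝ) • γ)
    (hsign : ∀ β ∈ Φ, (∀ γ ∈ Δ, 0 ≤ n β γ) ∨ (∀ γ ∈ Δ, n β γ ≤ 0))
    (hαΔ : α ∈ Δ) (hlong : ∀ γ ∈ Φ, ⟪γ, γ⟫ ≤ ⟪α, α⟫) :
    (∀ β ∈ Φ, starHeight Δ α (n β) = 1 →
      (β = α ∧ corootPairing α β = 2) ∨ (n β α = 0 ∧ corootPairing α β = -1)) ∧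
    (∀ δ ∈ Φ, starHeight Δ α (n δ) = 2 → corootPairing α δ = 1) ∧
    (∀ β ∈ Φ, (starHeight Δ α (n β) = 1 ∨ starHeight Δ α (n β) = 2) → ⟪β, α⟫ ≠ 0) := by
  have norm_le : ∀ β ∈ Φ, ‖β‖ ≤ ‖α‖ := fun β hβ => by
    simpa only [real_inner_self_eq_norm_sq, sq_le_sq, abs_norm] using hlong β hβ
  have pairing_eq : ∀ β ∈ Φ, corootPairing α β = 3 * n β α - (starHeight Δ α (n β) : ℤ) :=
    fun β => corootPairing_eq_three_mul_coeff_sub_starHeight hrefl hcrys hΔΦ hΔli hn hsign hαΔ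
      norm_le
  have height_one : ∀ β ∈ Φ, starHeight Δ α (n β) = 1 →
      (β = α ∧ corootPairing α β = 2) ∨ (n β α = 0 ∧ corootPairing α β = -1) :=
    fun β hβ h => eq_or_eq_zero_of_corootPairing_eq_three_mul_sub_one (norm_le β hβ)
      (by rw [pairing_eq β hβ, h, Int.cast_one])
  have height_two : ∀ δ ∈ Φ, starHeight Δ α (n δ) = 2 → corootPairing α δ = 1 := by
    intro δ hδ h
    have coeff_of_eq_neg : δ = -α → n δ α = -1 := fun hδα => by
      exact_mod_cast coeff_eq_neg_one_of_neg_eq_sum hΔli hαΔ (hδα.symm.trans (hn δ hδ))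
    exact corootPairing_eq_one_of_eq_three_mul_sub_two (norm_le δ hδ)
      (by rw [pairing_eq δ hδ, h, Int.cast_two]) coeff_of_eq_neg
  refine ⟨height_one, height_two, fun β hβ h hinner => ?_⟩
  have pairing_zero := corootPairing_eq_zero_of_inner_eq_zero hinner
  rcases h with h | h
  · rcases height_one β hβ h with ⟨-, h⟩ | ⟨-, h⟩ <;> norm_num [pairing_zero] at h
  · exact zero_ne_one (pairing_zero.symm.trans (height_two β hβ h))

end LongSimpleRoot

/-- Let `Φ` be the root system of a finite-dimensional complex simple Lie algebra
(an irreducible reduced crystallographic root system) with base `Δ`, and let `α ∈ Δ` be a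
long simple root; set `Σ_q := {α} ∪ N(α)` and `⟨β, α^∨⟩ := 2(β,α)/(α,α)`.  Then:
(a) every root `β` with `ht_{Σ_q}(β) = 1` is either equal to `α`, in which case
`⟨β,α^∨⟩ = 2`, or satisfies `n_α(β) = 0` and `⟨β,α^∨⟩ = −1`;
(b) every root `δ` with `ht_{Σ_q}(δ) = 2` satisfies `⟨δ,α^∨⟩ = 1`.
In particular `β(H_α) ≠ 0`, i.e. `(β, α) ≠ 0`, for every root `β` with
`ht_{Σ_q}(β) ∈ {1, 2}` (where `H_α` is the element of the Cartan subalgebra representing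
`α` via the Killing form, so that `β(H_α)` is a positive multiple of `(β,α)`). -/
theorem pairing_with_long_coroot_on_low_heights
    {E : Type*} [NormedAddCommGroup E] [InnerProductSpace ℝ E]
    (Φ : Finset E)
    (hΦ0 : (0 : E) ∉ Φ)
    (hspan : Submodule.span ℝ (Φ : Set E) = ⊤)
    (hrefl : ∀ α ∈ Φ, ∀ β ∈ Φ, β - (2 * ⟪β, α⟫ / ⟪α, α⟫) • α ∈ Φ)
    (hcrys : ∀ α ∈ Φ, ∀ β ∈ Φ, ∃ m : ℤ, 2 * ⟪β, α⟫ / ⟪α, α⟫ = (m : ℝ))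
    (hred : ∀ α ∈ Φ, ∀ t : ℝ, t • α ∈ Φ → t = 1 ∨ t = -1)
    (hirr : ∀ S : Set E,
      (∀ β ∈ Φ, ∀ γ ∈ Φ, β ∈ S → ⟪β, γ⟫ ≠ 0 → γ ∈ S) →
      (∃ β ∈ Φ, β ∈ S) → ∀ β ∈ Φ, β ∈ S)
    (Δ : Finset E) (hΔΦ : (Δ : Set E) ⊆ (Φ : Set E))
    (hΔli : LinearIndependent ℝ (fun γ : Δ => (γ : E)))
    (n : E → E → ℤ)
    (hn : ∀ β ∈ Φ, β = ∑ γ ∈ Δ, (n β γ : ℝ) • γ)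
    (hsign : ∀ β ∈ Φ, (∀ γ ∈ Δ, 0 ≤ n β γ) ∨ (∀ γ ∈ Δ, n β γ ≤ 0))
    (α : E) (hαΔ : α ∈ Δ)
    (hlong : ∀ γ ∈ Φ, ⟪γ, γ⟫ ≤ ⟪α, α⟫)
    (Nbr : Finset E) (hNbr : Nbr = Δ.filter fun γ => γ ≠ α ∧ ⟪γ, α⟫ ≠ 0)
    (Sq : Finset E) (hSq : Sq = insert α Nbr)
    (htq : E → ℤ) (hhtq : ∀ β, htq β = ∑ γ ∈ Sq, n β γ) :
    (∀ β ∈ Φ, htq β = 1 →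
      (β = α ∧ 2 * ⟪β, α⟫ / ⟪α, α⟫ = 2) ∨
      (n β α = 0 ∧ 2 * ⟪β, α⟫ / ⟪α, α⟫ = -1)) ∧
    (∀ δ ∈ Φ, htq δ = 2 → 2 * ⟪δ, α⟫ / ⟪α, α⟫ = 1) ∧
    (∀ β ∈ Φ, (htq β = 1 ∨ htq β = 2) → ⟪β, α⟫ ≠ 0) := by
  obtain rfl : htq = fun β => ∑ γ ∈ Sq, n β γ := funext hhtq
  subst hSq hNbr
  exact pairing_with_long_coroot_on_low_heights_general (Φ := (Φ : Set E))
    (hrefl α (hΔΦ hαΔ)) (hcrys α (hΔΦ hαΔ)) hΔΦ hΔli hn hsign hαΔ hlong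
end
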